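/- For all δ > 0 there is a constant c > 0 such that the following holds for all p ∈ [1/2 + δ, 1]. If f : {0,1}^n → {0,1} satisfies var(f) > 0 and E_x[s_f(x)^p] ≤ A, then there exists i ∈ [n] such that I_i[f] ≥ 2^{−c·(A/var(f))^{1/p}}. -/

import Mathlib

open Finset

noncomputable section

/-- Expectation over the uniform distribution on `{0,1}^n`. -/
def hcExp (n : ℕ) (g : (Fin n → Bool) → ℝ) : ℝ :=
  (∑ x : Fin n → Bool, g x) / 2 ^ n

/-- Flip the `i`-th coordinate of `x`. -/
def hcFlip {n : ℕ} (x : Fin n → Bool) (i : Fin n) : Fin n → Bool :=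
  Function.update x i (!(x i))

/-- Sensitivity of `f` at `x`. -/
def sens {n : ℕ} (f : (Fin n → Bool) → Bool) (x : Fin n → Bool) : ℕ :=
  (Finset.univ.filter fun i => f (hcFlip x i) ≠ f x).card

/-- `f` with values in `{0,1} ⊆ ℝ`. -/
def toReal {n : ℕ} (f : (Fin n → Bool) → Bool) : (Fin n → Bool) → ℝ :=
  fun x => if f x then 1 else 0

/-- Variance of a Boolean function. -/
def hcVar (n : ℕ) (f : (Fin n → Bool) → Bool) : ℝ :=
  hcExp n (toReal f) - (hcExp n (toReal f)) ^ 2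

/-- Influence of coordinate `i`. -/
def influence (n : ℕ) (f : (Fin n → Bool) → Bool) (i : Fin n) : ℝ :=
  hcExp n (fun x => if f (hcFlip x i) = f x then 0 else 1)

/-- Fourier character. -/
def chi {n : ℕ} (S : Finset (Fin n)) (x : Fin n → Bool) : ℝ :=
  ∏ i ∈ S, (if x i then (-1 : ℝ) else 1)

/-- Fourier coefficient of `g` at `S`. -/
def fcoef (n : ℕ) (g : (Fin n → Bool) → ℝ) (S : Finset (Fin n)) : ℝ :=
  hcExp n (fun x => g x * chi S x)

/-- Derivative of `g` along coordinate `i`. -/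
def derivOn {n : ℕ} (g : (Fin n → Bool) → ℝ) (i : Fin n) (x : Fin n → Bool) : ℝ :=
  g (Function.update x i false) - g (Function.update x i true)

/-- Euclidean norm of the gradient of `g` at `x`. -/
def gradNorm2 {n : ℕ} (g : (Fin n → Bool) → ℝ) (x : Fin n → Bool) : ℝ :=
  Real.sqrt (∑ i, (derivOn g i x) ^ 2)

/-- `ℓ_p` norm of the gradient of `g` at `x`. -/
def gradNormP {n : ℕ} (p : ℝ) (g : (Fin n → Bool) → ℝ) (x : Fin n → Bool) : ℝ :=
  (∑ i, |derivOn g i x| ^ p) ^ (1 / p)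

/-- Fourier weight at exactly level `d`. -/
def wEq (n : ℕ) (g : (Fin n → Bool) → ℝ) (d : ℕ) : ℝ :=
  ∑ S ∈ Finset.univ.filter (fun S : Finset (Fin n) => S.card = d), (fcoef n g S) ^ 2

/-- Approximate level-`d` Fourier weight: levels in `[d, 2d)`. -/
def wApprox (n : ℕ) (g : (Fin n → Bool) → ℝ) (d : ℕ) : ℝ :=
  ∑ S ∈ Finset.univ.filter (fun S : Finset (Fin n) => d ≤ S.card ∧ S.card < 2 * d),
    (fcoef n g S) ^ 2

/-- Fourier weight at levels `≥ d`. -/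
def wGe (n : ℕ) (g : (Fin n → Bool) → ℝ) (d : ℕ) : ℝ :=
  ∑ S ∈ Finset.univ.filter (fun S : Finset (Fin n) => d ≤ S.card), (fcoef n g S) ^ 2

/-!
Write `E = 𝔼[s_f ^ p]`, let `L_i` be the coordinate Laplacians and `T_ρ` the noise operator, and
consider the energy `∑ i, ‖T_ρ L_i f‖₂²`. Moving one `T_ρ` onto the other factor, the energy is an
average of `∑ i, L_i f(x) * u_i(y)` with `u_i = T_ρ L_i f`. Here the vector `L_i f(x)` has `s_f(x)`
entries of size `1 / 2`, while `u(y)` is bounded in `ℓ₂` (a pointwise Poincaré inequality for the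
noise) and in `ℓ_∞`; interpolating gives a multiple of `s_f(x) ^ p`.

* With `ρ² = 1 - 1 / (2d)` this shows that the weight of `f` above level `d` is `O(E * d ^ (-p))`,
  hence at most half of the variance once `d` is a large multiple of `(E / var f) ^ (1 / p)`.
* With `ρ = 1 / 4`, the entries `u_i(y)` larger than `τ` are handled by `2 → 4` hypercontractivity:
  they contribute at most `τ⁻² * max I_i * var f`. The others contribute `τ ^ (2p - 1) * E`, and
  `2p - 1 ≥ 2δ`. So the energy is at most `(max I_i) ^ (δ / 2) * (var f + E)`, and it dominates
  `16 ^ (-d)` times the weight on the levels below `d`.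
-/

variable {n : ℕ}

/-! ### Expectation on the cube -/

lemma hcExp_add (g h : (Fin n → Bool) → ℝ) :
    hcExp n (fun x => g x + h x) = hcExp n g + hcExp n h := by
  simp only [hcExp, sum_add_distrib, add_div]

lemma hcExp_const_mul (c : ℝ) (g : (Fin n → Bool) → ℝ) :
    hcExp n (fun x => c * g x) = c * hcExp n g := by
  simp only [hcExp, ← mul_sum, mul_div_assoc]

lemma hcExp_sum {ι : Type*} (s : Finset ι) (g : ι → (Fin n → Bool) → ℝ) :
    hcExp n (fun x => ∑ i ∈ s, g i x) = ∑ i ∈ s, hcExp n (g i) := by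
  simp only [hcExp, sum_div]
  exact sum_comm

lemma hcExp_const (c : ℝ) : hcExp n (fun _ => c) = c := by
  simp [hcExp]

lemma hcExp_mono {g h : (Fin n → Bool) → ℝ} (hgh : ∀ x, g x ≤ h x) :
    hcExp n g ≤ hcExp n h := by
  unfold hcExp
  gcongr with x
  exact hgh x

lemma hcExp_nonneg {g : (Fin n → Bool) → ℝ} (hg : ∀ x, 0 ≤ g x) : 0 ≤ hcExp n g :=
  div_nonneg (sum_nonneg fun x _ => hg x) (by positivity)

lemma hcExp_mul_sq_le (g h : (Fin n → Bool) → ℝ) :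
    hcExp n (fun x => g x * h x) ^ 2
      ≤ hcExp n (fun x => g x ^ 2) * hcExp n (fun x => h x ^ 2) := by
  unfold hcExp
  rw [div_pow, div_mul_div_comm, ← sq]
  gcongr
  exact sum_mul_sq_le_sq_mul_sq _ _ _

lemma hcFlip_hcFlip (x : Fin n → Bool) (i : Fin n) : hcFlip (hcFlip x i) i = x := by
  simp [hcFlip]

lemma hcExp_comp_hcFlip (i : Fin n) (g : (Fin n → Bool) → ℝ) :
    hcExp n (fun x => g (hcFlip x i)) = hcExp n g := by
  unfold hcExp
  congr 1
  exact Equiv.sum_comp (Function.Involutive.toPerm (hcFlip · i) (hcFlip_hcFlip · i)) g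

lemma hcExp_eq_zero_of_hcFlip_eq_neg (i : Fin n) {g : (Fin n → Bool) → ℝ}
    (hg : ∀ x, g (hcFlip x i) = -g x) : hcExp n g = 0 := by
  have hneg : hcExp n (fun x => -1 * g x) = hcExp n g := by
    simpa only [hg, neg_one_mul] using hcExp_comp_hcFlip i g
  rw [hcExp_const_mul] at hneg
  linarith

/-! ### Fourier analysis on the cube -/

lemma chi_hcFlip (S : Finset (Fin n)) (x : Fin n → Bool) (i : Fin n) :
    chi S (hcFlip x i) = (if i ∈ S then -1 else 1) * chi S x := by
  have hoff : ∀ j, j ≠ i →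
      (if hcFlip x i j then (-1 : ℝ) else 1) = if x j then -1 else 1 :=
    fun j hj => by rw [hcFlip, Function.update_of_ne hj]
  unfold chi
  split_ifs with hi
  · rw [← mul_prod_erase S _ hi, ← mul_prod_erase S _ hi, ← mul_assoc,
      prod_congr rfl fun j hj => hoff j (ne_of_mem_erase hj)]
    cases hx : x i <;> simp [hcFlip, hx]
  · rw [one_mul, prod_congr rfl fun j hj => hoff j (ne_of_mem_of_not_mem hj hi)]

lemma chi_mul_self (S : Finset (Fin n)) (x : Fin n → Bool) : chi S x * chi S x = 1 := by
  rw [chi, ← prod_mul_distrib]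
  exact prod_eq_one fun i _ => by split_ifs <;> norm_num

lemma hcExp_chi_mul_chi (S T : Finset (Fin n)) :
    hcExp n (fun x => chi S x * chi T x) = if S = T then 1 else 0 := by
  split_ifs with hST
  · simp only [hST, chi_mul_self, hcExp_const]
  · obtain ⟨i, hi⟩ : ∃ i, ¬(i ∈ S ↔ i ∈ T) := by
      contrapose! hST
      exact Finset.ext hST
    refine hcExp_eq_zero_of_hcFlip_eq_neg i fun x => ?_
    rw [chi_hcFlip, chi_hcFlip]
    by_cases hS : i ∈ S <;> by_cases hT : i ∈ T <;> simp_all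

lemma sum_chi_mul_chi (x y : Fin n → Bool) :
    ∑ S : Finset (Fin n), chi S x * chi S y = if x = y then 2 ^ n else 0 := by
  have hprod : ∑ S : Finset (Fin n), chi S x * chi S y
      = ∏ i, (1 + (if x i then (-1 : ℝ) else 1) * (if y i then (-1 : ℝ) else 1)) := by
    simp only [prod_one_add, powerset_univ, chi, prod_mul_distrib]
  rw [hprod]
  split_ifs with hxy
  · have htwo : ∀ i, 1 + (if x i then (-1 : ℝ) else 1) * (if x i then (-1 : ℝ) else 1) = 2 :=
      fun i => by split_ifs <;> norm_num
    simp only [← hxy, htwo, prod_const, card_univ, Fintype.card_fin]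
  · obtain ⟨i, hi⟩ := Function.ne_iff.mp hxy
    apply prod_eq_zero (mem_univ i)
    cases hx : x i <;> cases hy : y i <;> simp_all

lemma sum_fcoef_mul_chi (g : (Fin n → Bool) → ℝ) (x : Fin n → Bool) :
    ∑ S, fcoef n g S * chi S x = g x := by
  have hcoef : ∀ S, fcoef n g S * chi S x = hcExp n (fun y => g y * (chi S y * chi S x)) := by
    intro S
    simp only [fcoef, mul_comm _ (chi S x), ← hcExp_const_mul, mul_left_comm]
  simp only [hcoef, ← hcExp_sum, ← mul_sum, sum_chi_mul_chi]
  simp [hcExp]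

lemma fcoef_sum_mul {ι : Type*} (s : Finset ι) (a : ι → ℝ) (u : ι → (Fin n → Bool) → ℝ)
    (S : Finset (Fin n)) :
    fcoef n (fun x => ∑ i ∈ s, a i * u i x) S = ∑ i ∈ s, a i * fcoef n (u i) S := by
  simp only [fcoef, sum_mul, hcExp_sum, mul_assoc, hcExp_const_mul]

lemma fcoef_sum_mul_chi (c : Finset (Fin n) → ℝ) (S : Finset (Fin n)) :
    fcoef n (fun x => ∑ T, c T * chi T x) S = c S := by
  rw [fcoef_sum_mul univ c chi]
  simp [fcoef, hcExp_chi_mul_chi]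

lemma fcoef_injective : Function.Injective (fcoef n) := fun g h hgh => by
  funext x
  rw [← sum_fcoef_mul_chi g, ← sum_fcoef_mul_chi h, hgh]

lemma hcExp_mul_eq_sum_fcoef (g h : (Fin n → Bool) → ℝ) :
    hcExp n (fun x => g x * h x) = ∑ S, fcoef n g S * fcoef n h S := by
  calc hcExp n (fun x => g x * h x)
      = hcExp n (fun x => ∑ S, fcoef n g S * (h x * chi S x)) := by
        congr 1 with x
        rw [← sum_fcoef_mul_chi g x, sum_mul]
        exact sum_congr rfl fun S _ => by ring
    _ = ∑ S, fcoef n g S * fcoef n h S := by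
        simp only [hcExp_sum, hcExp_const_mul, fcoef]

lemma hcExp_sq_eq_sum_fcoef_sq (g : (Fin n → Bool) → ℝ) :
    hcExp n (fun x => g x ^ 2) = ∑ S, fcoef n g S ^ 2 := by
  simp only [sq, hcExp_mul_eq_sum_fcoef]

/-- The Fourier weight of `g` on the levels `a ≤ k < b`. -/
def wBand (n : ℕ) (g : (Fin n → Bool) → ℝ) (a b : ℕ) : ℝ :=
  ∑ S with a ≤ #S ∧ #S < b, fcoef n g S ^ 2

lemma wGe_eq_wBand_add_wGe (g : (Fin n → Bool) → ℝ) {a b : ℕ} (hab : a ≤ b) :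
    wGe n g a = wBand n g a b + wGe n g b := by
  simp only [wGe, wBand]
  rw [← sum_filter_add_sum_filter_not ({S | a ≤ #S} : Finset (Finset (Fin n))) (#· < b),
    filter_filter, filter_filter]
  congr! 3 with S
  omega

lemma wGe_eq_zero_of_lt (g : (Fin n → Bool) → ℝ) {d : ℕ} (hd : n < d) : wGe n g d = 0 := by
  rw [wGe, filter_false_of_mem, sum_empty]
  intro S _
  have := card_finset_fin_le S
  omega

/-- A dyadic decomposition: for `1 / 2 ≤ p` the geometric ratio `2 ^ (-p)` is at most `3 / 4`,
whence the factor `4`. -/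
lemma wGe_le_of_wApprox_le {g : (Fin n → Bool) → ℝ} {C p : ℝ} (hp : 1 / 2 ≤ p)
    (hg : ∀ d : ℕ, 1 ≤ d → wApprox n g d ≤ C * (d : ℝ) ^ (-p)) {d : ℕ} (hd : 1 ≤ d) :
    wGe n g d ≤ 4 * (C * (d : ℝ) ^ (-p)) := by
  have hC : 0 ≤ C * (d : ℝ) ^ (-p) := (sum_nonneg fun S _ => sq_nonneg _).trans (hg d hd)
  rcases lt_or_ge n d with hnd | _
  · rw [wGe_eq_zero_of_lt g hnd]
    positivity
  have htail := wGe_le_of_wApprox_le hp hg (show 1 ≤ 2 * d by omega)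
  have hratio : (2 : ℝ) ^ (-p) ≤ 3 / 4 :=
    calc (2 : ℝ) ^ (-p) ≤ 2 ^ (-(1 / 2) : ℝ) :=
          Real.rpow_le_rpow_of_exponent_le one_le_two (by linarith)
      _ = √(1 / 2) := by
          rw [Real.rpow_neg zero_le_two, ← Real.sqrt_eq_rpow, one_div, Real.sqrt_inv]
      _ ≤ 3 / 4 := Real.sqrt_le_iff.mpr (by norm_num)
  push_cast at htail
  rw [Real.mul_rpow zero_le_two (by positivity)] at htail
  calc wGe n g d = wApprox n g d + wGe n g (2 * d) := wGe_eq_wBand_add_wGe g (by omega)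
    _ ≤ C * (d : ℝ) ^ (-p) + 4 * (2 ^ (-p) * (C * (d : ℝ) ^ (-p))) := by
        linarith [hg d hd]
    _ ≤ C * (d : ℝ) ^ (-p) + 4 * (3 / 4 * (C * (d : ℝ) ^ (-p))) := by gcongr
    _ = 4 * (C * (d : ℝ) ^ (-p)) := by ring
termination_by n + 1 - d

lemma toReal_sq (f : (Fin n → Bool) → Bool) (x : Fin n → Bool) :
    toReal f x ^ 2 = toReal f x := by
  unfold toReal; split_ifs <;> norm_num

lemma hcVar_eq_wGe_one (f : (Fin n → Bool) → Bool) : hcVar n f = wGe n (toReal f) 1 := by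
  have hmean : hcExp n (toReal f) = wGe n (toReal f) 0 := by
    simpa only [toReal_sq, wGe, zero_le, filter_true] using hcExp_sq_eq_sum_fcoef_sq (toReal f)
  have hempty : wBand n (toReal f) 0 1 = hcExp n (toReal f) ^ 2 := by
    simp [wBand, fcoef, chi, filter_eq']
  rw [hcVar, ← hempty, hmean, wGe_eq_wBand_add_wGe _ zero_le_one, add_sub_cancel_left]

/-! ### Noise and discrete derivatives -/

/-- The noise operator acting on the coordinates in `I`, in its Fourier form: it multiplies the
coefficient at `S` by `ρ ^ #(S ∩ I)`. -/
def noise (I : Finset (Fin n)) (ρ : ℝ) (g : (Fin n → Bool) → ℝ) : (Fin n → Bool) → ℝ :=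
  fun x => ∑ S, ρ ^ #(S ∩ I) * fcoef n g S * chi S x

/-- The `i`-th coordinate Laplacian `L_i`, normalized so that it projects onto the characters of
sets containing `i`. -/
def coordLaplacian (i : Fin n) (g : (Fin n → Bool) → ℝ) : (Fin n → Bool) → ℝ :=
  fun x => (g x - g (hcFlip x i)) / 2

/-- The Dirichlet energy `∑ i, ‖L_i T_ρ g‖₂²` of `g` after noise on all coordinates. -/
def noiseEnergy (ρ : ℝ) (g : (Fin n → Bool) → ℝ) : ℝ :=
  ∑ i, hcExp n (fun x => noise univ ρ (coordLaplacian i g) x ^ 2)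

lemma fcoef_noise (I : Finset (Fin n)) (ρ : ℝ) (g : (Fin n → Bool) → ℝ) (S : Finset (Fin n)) :
    fcoef n (noise I ρ g) S = ρ ^ #(S ∩ I) * fcoef n g S :=
  fcoef_sum_mul_chi _ S

lemma fcoef_coordLaplacian (i : Fin n) (g : (Fin n → Bool) → ℝ) (S : Finset (Fin n)) :
    fcoef n (coordLaplacian i g) S = if i ∈ S then fcoef n g S else 0 := by
  have hexpand : coordLaplacian i g
      = fun x => ∑ S, (if i ∈ S then fcoef n g S else 0) * chi S x := by
    funext x
    rw [coordLaplacian, ← sum_fcoef_mul_chi g x, ← sum_fcoef_mul_chi g (hcFlip x i),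
      ← sum_sub_distrib, sum_div]
    refine sum_congr rfl fun S _ => ?_
    rw [chi_hcFlip]
    split_ifs <;> ring
  rw [hexpand, fcoef_sum_mul_chi]

lemma noise_empty (ρ : ℝ) (g : (Fin n → Bool) → ℝ) : noise ∅ ρ g = g := by
  funext x
  simp [noise, sum_fcoef_mul_chi]

lemma noise_insert {I : Finset (Fin n)} {i : Fin n} (hi : i ∉ I) (ρ : ℝ)
    (g : (Fin n → Bool) → ℝ) (x : Fin n → Bool) :
    noise (insert i I) ρ g x
      = (1 + ρ) / 2 * noise I ρ g x + (1 - ρ) / 2 * noise I ρ g (hcFlip x i) := by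
  simp only [noise, mul_sum, ← sum_add_distrib]
  refine sum_congr rfl fun S _ => ?_
  rw [chi_hcFlip]
  by_cases hS : i ∈ S
  · rw [inter_insert_of_mem hS, card_insert_of_notMem (by simp [hi]), if_pos hS]
    ring
  · rw [inter_insert_of_notMem hS, if_neg hS]
    ring

lemma noise_univ_noise_univ (ρ σ : ℝ) (g : (Fin n → Bool) → ℝ) :
    noise univ ρ (noise univ σ g) = noise univ (ρ * σ) g :=
  fcoef_injective <| funext fun S => by simp only [fcoef_noise, mul_pow, mul_assoc]

lemma noise_sum_mul (I : Finset (Fin n)) (ρ : ℝ) {ι : Type*} (s : Finset ι) (a : ι → ℝ)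
    (u : ι → (Fin n → Bool) → ℝ) (x : Fin n → Bool) :
    noise I ρ (fun y => ∑ i ∈ s, a i * u i y) x = ∑ i ∈ s, a i * noise I ρ (u i) x := by
  simp only [noise, fcoef_sum_mul, mul_sum, sum_mul]
  rw [sum_comm]
  exact sum_congr rfl fun i _ => sum_congr rfl fun S _ => by ring

lemma noise_coordLaplacian (I : Finset (Fin n)) (i : Fin n) (ρ : ℝ) (g : (Fin n → Bool) → ℝ) :
    noise I ρ (coordLaplacian i g) = coordLaplacian i (noise I ρ g) :=
  fcoef_injective <| funext fun S => by
    simp only [fcoef_noise, fcoef_coordLaplacian, mul_ite, mul_zero]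

lemma hcExp_noise_mul (I : Finset (Fin n)) (ρ : ℝ) (g h : (Fin n → Bool) → ℝ) :
    hcExp n (fun x => noise I ρ g x * h x) = hcExp n (fun x => g x * noise I ρ h x) := by
  simp only [hcExp_mul_eq_sum_fcoef, fcoef_noise]
  exact sum_congr rfl fun S _ => by ring

lemma noise_mono (I : Finset (Fin n)) {ρ : ℝ} (hρ0 : 0 ≤ ρ) (hρ1 : ρ ≤ 1)
    {g h : (Fin n → Bool) → ℝ} (hgh : ∀ x, g x ≤ h x) (x : Fin n → Bool) :
    noise I ρ g x ≤ noise I ρ h x := by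
  induction I using Finset.induction_on generalizing x with
  | empty => simpa only [noise_empty] using hgh x
  | insert i I hi ih =>
    rw [noise_insert hi, noise_insert hi]
    have : 0 ≤ (1 - ρ) / 2 := by linarith
    gcongr
    · exact ih x
    · exact ih (hcFlip x i)

lemma noise_const (I : Finset (Fin n)) (ρ c : ℝ) (x : Fin n → Bool) :
    noise I ρ (fun _ => c) x = c := by
  induction I using Finset.induction_on generalizing x with
  | empty => rw [noise_empty]
  | insert i I hi ih =>
    rw [noise_insert hi, ih, ih]
    ring

lemma noise_le_of_le (I : Finset (Fin n)) {ρ : ℝ} (hρ0 : 0 ≤ ρ) (hρ1 : ρ ≤ 1)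
    {g : (Fin n → Bool) → ℝ} {c : ℝ} (hg : ∀ x, g x ≤ c) (x : Fin n → Bool) :
    noise I ρ g x ≤ c :=
  (noise_mono I hρ0 hρ1 hg x).trans_eq (noise_const I ρ c x)

lemma abs_noise_le_of_abs_le (I : Finset (Fin n)) {ρ : ℝ} (hρ0 : 0 ≤ ρ) (hρ1 : ρ ≤ 1)
    {g : (Fin n → Bool) → ℝ} {c : ℝ} (hg : ∀ x, |g x| ≤ c) (x : Fin n → Bool) :
    |noise I ρ g x| ≤ c :=
  abs_le.mpr ⟨(noise_const I ρ (-c) x).symm.trans_le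
      (noise_mono I hρ0 hρ1 (fun y => (abs_le.mp (hg y)).1) x),
    noise_le_of_le I hρ0 hρ1 (fun y => (abs_le.mp (hg y)).2) x⟩

lemma hcExp_noise_sq_le (I : Finset (Fin n)) {ρ : ℝ} (hρ : ρ ^ 2 ≤ 1)
    (g : (Fin n → Bool) → ℝ) :
    hcExp n (fun x => noise I ρ g x ^ 2) ≤ hcExp n (fun x => g x ^ 2) := by
  simp only [hcExp_sq_eq_sum_fcoef_sq, fcoef_noise]
  refine sum_le_sum fun S _ => ?_
  rw [mul_pow, pow_right_comm]
  exact mul_le_of_le_one_left (sq_nonneg _) (pow_le_one₀ (sq_nonneg ρ) hρ)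

lemma noiseEnergy_eq_sum (ρ : ℝ) (g : (Fin n → Bool) → ℝ) :
    noiseEnergy ρ g = ∑ S, (#S : ℝ) * (ρ ^ 2) ^ #S * fcoef n g S ^ 2 := by
  simp only [noiseEnergy, hcExp_sq_eq_sum_fcoef_sq, fcoef_noise, fcoef_coordLaplacian, inter_univ]
  rw [sum_comm]
  refine sum_congr rfl fun S _ => ?_
  simp only [mul_ite, mul_zero, ite_pow, ne_eq, OfNat.ofNat_ne_zero, not_false_eq_true, zero_pow,
    sum_ite_mem, univ_inter, sum_const, nsmul_eq_mul]
  ring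

lemma noiseEnergy_le_wGe_one {ρ : ℝ} (hρ : ρ ^ 2 ≤ 1 / 2) (g : (Fin n → Bool) → ℝ) :
    noiseEnergy ρ g ≤ wGe n g 1 := by
  rw [noiseEnergy_eq_sum, wGe, sum_filter]
  refine sum_le_sum fun S _ => ?_
  split_ifs with hS
  · refine mul_le_of_le_one_left (sq_nonneg _) ?_
    calc (#S : ℝ) * (ρ ^ 2) ^ #S ≤ 2 ^ #S * (1 / 2) ^ #S := by
          gcongr
          exact_mod_cast Nat.lt_two_pow_self.le
      _ = 1 := by rw [← mul_pow]; norm_num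
  · simp [show #S = 0 by omega]

lemma mul_wBand_le_noiseEnergy {ρ : ℝ} (hρ : ρ ^ 2 ≤ 1) (g : (Fin n → Bool) → ℝ) (a b : ℕ) :
    a * (ρ ^ 2) ^ b * wBand n g a b ≤ noiseEnergy ρ g := by
  rw [noiseEnergy_eq_sum, wBand, mul_sum]
  refine (sum_le_sum fun S hS => ?_).trans
    (sum_le_univ_sum_of_nonneg fun S => by positivity)
  obtain ⟨haS, hSb⟩ := (mem_filter_univ S).mp hS
  have hpow : (ρ ^ 2) ^ b ≤ (ρ ^ 2) ^ #S := pow_le_pow_of_le_one (sq_nonneg ρ) hρ hSb.le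
  gcongr

/-! ### Hypercontractivity -/

/-- The Fourier polynomial with coefficients `c`, restricted to the characters in the
coordinates `I`. -/
def fourierSum (I : Finset (Fin n)) (c : Finset (Fin n) → ℝ) : (Fin n → Bool) → ℝ :=
  fun x => ∑ S ∈ I.powerset, c S * chi S x

lemma fourierSum_hcFlip {I : Finset (Fin n)} {i : Fin n} (hi : i ∉ I) (c : Finset (Fin n) → ℝ)
    (x : Fin n → Bool) : fourierSum I c (hcFlip x i) = fourierSum I c x := by
  refine sum_congr rfl fun S hS => ?_
  rw [chi_hcFlip, if_neg fun h => hi (mem_powerset.mp hS h), one_mul]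

lemma fourierSum_insert {I : Finset (Fin n)} {i : Fin n} (hi : i ∉ I)
    (c : Finset (Fin n) → ℝ) (x : Fin n → Bool) :
    fourierSum (insert i I) c x
      = fourierSum I c x + chi {i} x * fourierSum I (fun S => c (insert i S)) x := by
  rw [fourierSum, sum_powerset_insert hi, fourierSum, fourierSum, mul_sum]
  congr 1
  refine sum_congr rfl fun S hS => ?_
  have hiS : i ∉ S := fun h => hi (mem_powerset.mp hS h)
  simp only [chi, prod_insert hiS, prod_singleton]
  ring

lemma hcExp_add_chi_mul_pow_four {i : Fin n} {g h : (Fin n → Bool) → ℝ}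
    (hg : ∀ x, g (hcFlip x i) = g x) (hh : ∀ x, h (hcFlip x i) = h x) :
    hcExp n (fun x => (g x + chi {i} x * h x) ^ 4)
      = hcExp n (fun x => g x ^ 4) + 6 * hcExp n (fun x => g x ^ 2 * h x ^ 2)
        + hcExp n (fun x => h x ^ 4) := by
  have hexpand : ∀ x, (g x + chi {i} x * h x) ^ 4
      = g x ^ 4 + 6 * (g x ^ 2 * h x ^ 2) + h x ^ 4
        + chi {i} x * (4 * (g x ^ 3 * h x + g x * h x ^ 3)) := fun x => by
    have hsq : chi {i} x ^ 2 = 1 := by rw [sq, chi_mul_self]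
    linear_combination (6 * g x ^ 2 * h x ^ 2 + 4 * chi {i} x * (g x * h x ^ 3)
      + (chi {i} x ^ 2 + 1) * h x ^ 4) * hsq
  have hodd : hcExp n (fun x => chi {i} x * (4 * (g x ^ 3 * h x + g x * h x ^ 3))) = 0 :=
    hcExp_eq_zero_of_hcFlip_eq_neg i fun x => by simp [chi_hcFlip, hg, hh]
  simp only [hexpand]
  rw [hcExp_add, hodd, hcExp_add, hcExp_add, hcExp_const_mul, add_zero]

lemma hcExp_add_chi_mul_pow_four_le {i : Fin n} {g h : (Fin n → Bool) → ℝ} {a b : ℝ}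
    (hg : ∀ x, g (hcFlip x i) = g x) (hh : ∀ x, h (hcFlip x i) = h x) (ha : 0 ≤ a) (hb : 0 ≤ b)
    (hga : hcExp n (fun x => g x ^ 4) ≤ a ^ 2) (hhb : 9 * hcExp n (fun x => h x ^ 4) ≤ b ^ 2) :
    hcExp n (fun x => (g x + chi {i} x * h x) ^ 4) ≤ (a + b) ^ 2 := by
  have hh4 : 0 ≤ hcExp n (fun x => h x ^ 4) := hcExp_nonneg fun x => by positivity
  have hcross : 3 * hcExp n (fun x => g x ^ 2 * h x ^ 2) ≤ a * b := by
    have hcs := hcExp_mul_sq_le (fun x => g x ^ 2) (fun x => h x ^ 2)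
    simp only [← pow_mul, Nat.reduceMul] at hcs
    refine le_of_sq_le_sq ?_ (by positivity)
    calc (3 * hcExp n (fun x => g x ^ 2 * h x ^ 2)) ^ 2
        ≤ hcExp n (fun x => g x ^ 4) * (9 * hcExp n (fun x => h x ^ 4)) := by linarith
      _ ≤ a ^ 2 * b ^ 2 := by gcongr
      _ = (a * b) ^ 2 := by ring
  rw [hcExp_add_chi_mul_pow_four hg hh]
  linarith

lemma hcExp_fourierSum_pow_four_le (I : Finset (Fin n)) {ρ : ℝ} (hρ : ρ ^ 2 ≤ 1 / 3)
    (c : Finset (Fin n) → ℝ) :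
    hcExp n (fun x => fourierSum I (fun S => ρ ^ #S * c S) x ^ 4)
      ≤ (∑ S ∈ I.powerset, c S ^ 2) ^ 2 := by
  induction I using Finset.induction_on generalizing c with
  | empty => simp [fourierSum, chi, hcExp_const, ← pow_mul]
  | insert i I hi ih =>
    have hscale : ∀ x, fourierSum I (fun S => ρ ^ #(insert i S) * c (insert i S)) x
        = ρ * fourierSum I (fun S => ρ ^ #S * c (insert i S)) x := fun x => by
      rw [fourierSum, fourierSum, mul_sum]
      refine sum_congr rfl fun S hS => ?_
      rw [card_insert_of_notMem fun h => hi (mem_powerset.mp hS h)]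
      ring
    have hρ4 : 9 * ρ ^ 4 ≤ 1 := by nlinarith [sq_nonneg ρ]
    simp only [fourierSum_insert hi]
    rw [sum_powerset_insert hi]
    refine hcExp_add_chi_mul_pow_four_le (fourierSum_hcFlip hi _) (fourierSum_hcFlip hi _)
      (sum_nonneg fun S _ => sq_nonneg _) (sum_nonneg fun S _ => sq_nonneg _) (ih c) ?_
    simp only [hscale, mul_pow, hcExp_const_mul]
    calc 9 * (ρ ^ 4 * hcExp n (fun x => fourierSum I (fun S => ρ ^ #S * c (insert i S)) x ^ 4))
        = 9 * ρ ^ 4 * hcExp n (fun x => fourierSum I (fun S => ρ ^ #S * c (insert i S)) x ^ 4) := by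
          ring
      _ ≤ hcExp n (fun x => fourierSum I (fun S => ρ ^ #S * c (insert i S)) x ^ 4) :=
          mul_le_of_le_one_left (hcExp_nonneg fun x => by positivity) hρ4
      _ ≤ (∑ S ∈ I.powerset, c (insert i S) ^ 2) ^ 2 := ih fun S => c (insert i S)

lemma hcExp_noise_pow_four_le {ρ : ℝ} (hρ : ρ ^ 2 ≤ 1 / 3) (g : (Fin n → Bool) → ℝ) :
    hcExp n (fun x => noise univ ρ g x ^ 4) ≤ hcExp n (fun x => g x ^ 2) ^ 2 := by
  simpa [hcExp_sq_eq_sum_fcoef_sq, fourierSum, noise]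
    using hcExp_fourierSum_pow_four_le univ hρ (fcoef n g)

lemma sum_hcExp_noise_coordLaplacian_pow_four_le {ρ σ M : ℝ} (hρ : ρ ^ 2 ≤ 1 / 3)
    (hσ : σ ^ 2 ≤ 1 / 2) (hM : 0 ≤ M) (g : (Fin n → Bool) → ℝ)
    (hg : ∀ i, hcExp n (fun x => coordLaplacian i g x ^ 2) ≤ M) :
    ∑ i, hcExp n (fun x => noise univ (ρ * σ) (coordLaplacian i g) x ^ 4) ≤ M * wGe n g 1 := by
  have hle : ∀ i, hcExp n (fun x => noise univ (ρ * σ) (coordLaplacian i g) x ^ 4)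
      ≤ M * hcExp n (fun x => noise univ σ (coordLaplacian i g) x ^ 2) := fun i => by
    have hcontr : hcExp n (fun x => noise univ σ (coordLaplacian i g) x ^ 2) ≤ M :=
      (hcExp_noise_sq_le univ (by linarith) _).trans (hg i)
    rw [← noise_univ_noise_univ]
    refine (hcExp_noise_pow_four_le hρ _).trans ?_
    rw [sq]
    exact mul_le_mul_of_nonneg_right hcontr (hcExp_nonneg fun x => sq_nonneg _)
  calc ∑ i, hcExp n (fun x => noise univ (ρ * σ) (coordLaplacian i g) x ^ 4)
      ≤ M * noiseEnergy σ g := by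
        rw [noiseEnergy, mul_sum]
        exact sum_le_sum fun i _ => hle i
    _ ≤ M * wGe n g 1 := by
        gcongr
        exact noiseEnergy_le_wGe_one hσ g

/-! ### Gradient bounds -/

lemma noise_insert_coordLaplacian {I : Finset (Fin n)} {i : Fin n} (hi : i ∉ I) (ρ : ℝ)
    (g : (Fin n → Bool) → ℝ) (x : Fin n → Bool) :
    noise (insert i I) ρ (coordLaplacian i g) x
      = ρ * coordLaplacian i (noise I ρ g) x := by
  rw [noise_insert hi, noise_coordLaplacian, coordLaplacian, coordLaplacian, hcFlip_hcFlip]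
  ring

/-- A pointwise Poincaré inequality for the measure `T_ρ(x, ·)`, tensorized over `I`. -/
lemma sum_noise_coordLaplacian_sq_le (I : Finset (Fin n)) {ρ : ℝ} (hρ0 : 0 ≤ ρ) (hρ1 : ρ ≤ 1)
    (g : (Fin n → Bool) → ℝ) (x : Fin n → Bool) :
    (1 - ρ ^ 2) * ∑ i ∈ I, noise I ρ (coordLaplacian i g) x ^ 2
      ≤ ρ ^ 2 * (noise I ρ (fun y => g y ^ 2) x - noise I ρ g x ^ 2) := by
  induction I using Finset.induction_on generalizing x with
  | empty => simp [noise_empty]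
  | insert i I hi ih =>
    have hp : 0 ≤ (1 + ρ) / 2 := by linarith
    have hq : 0 ≤ (1 - ρ) / 2 := by linarith
    have hconvex : ∑ j ∈ I, noise (insert i I) ρ (coordLaplacian j g) x ^ 2
        ≤ (1 + ρ) / 2 * ∑ j ∈ I, noise I ρ (coordLaplacian j g) x ^ 2
          + (1 - ρ) / 2 * ∑ j ∈ I, noise I ρ (coordLaplacian j g) (hcFlip x i) ^ 2 := by
      simp only [mul_sum, ← sum_add_distrib]
      refine sum_le_sum fun j _ => ?_
      rw [noise_insert hi]
      exact even_two.convexOn_pow.2 trivial trivial hp hq (by ring)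
    have hvar : (1 - ρ ^ 2) * noise (insert i I) ρ (coordLaplacian i g) x ^ 2
          + ρ ^ 2 * noise (insert i I) ρ g x ^ 2
        = ρ ^ 2 * ((1 + ρ) / 2 * noise I ρ g x ^ 2
          + (1 - ρ) / 2 * noise I ρ g (hcFlip x i) ^ 2) := by
      rw [noise_insert_coordLaplacian hi, coordLaplacian, noise_insert hi]
      ring
    have hκ : 0 ≤ 1 - ρ ^ 2 := by nlinarith
    rw [sum_insert hi, noise_insert hi ρ (fun y => g y ^ 2)]
    linarith [mul_le_mul_of_nonneg_left (ih x) hp,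
      mul_le_mul_of_nonneg_left (ih (hcFlip x i)) hq, mul_le_mul_of_nonneg_left hconvex hκ]

lemma sum_noise_coordLaplacian_sq_le_div {ρ : ℝ} (hρ0 : 0 ≤ ρ) (hρ1 : ρ < 1)
    {g : (Fin n → Bool) → ℝ} (hg : ∀ x, g x ^ 2 ≤ 1) (x : Fin n → Bool) :
    ∑ i, noise univ ρ (coordLaplacian i g) x ^ 2 ≤ ρ ^ 2 / (1 - ρ ^ 2) := by
  rw [le_div_iff₀' (by nlinarith)]
  calc (1 - ρ ^ 2) * ∑ i, noise univ ρ (coordLaplacian i g) x ^ 2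
      ≤ ρ ^ 2 * (noise univ ρ (fun y => g y ^ 2) x - noise univ ρ g x ^ 2) :=
        sum_noise_coordLaplacian_sq_le univ hρ0 hρ1.le g x
    _ ≤ ρ ^ 2 * (1 - 0) := by
        gcongr
        · exact noise_le_of_le univ hρ0 hρ1.le hg x
        · positivity
    _ = ρ ^ 2 := by ring

/-! ### Boolean functions and the moment of the sensitivity -/

lemma abs_coordLaplacian_toReal (f : (Fin n → Bool) → Bool) (i : Fin n) (x : Fin n → Bool) :
    |coordLaplacian i (toReal f) x| = if f (hcFlip x i) ≠ f x then 1 / 2 else 0 := by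
  unfold coordLaplacian toReal
  cases f (hcFlip x i) <;> cases f x <;> simp [abs_div]

lemma sum_ite_hcFlip_ne (f : (Fin n → Bool) → Bool) (x : Fin n → Bool) (c : ℝ) :
    ∑ i, (if f (hcFlip x i) ≠ f x then c else 0) = sens f x * c := by
  rw [← sum_filter, sum_const, nsmul_eq_mul, sens]

lemma hcExp_coordLaplacian_toReal_sq (f : (Fin n → Bool) → Bool) (i : Fin n) :
    hcExp n (fun x => coordLaplacian i (toReal f) x ^ 2) = influence n f i / 4 := by
  rw [influence, div_eq_inv_mul, ← hcExp_const_mul]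
  congr 1 with x
  rw [← sq_abs, abs_coordLaplacian_toReal, ite_not]
  split_ifs <;> norm_num

lemma le_rpow_mul_rpow_mul_rpow {b s R τ p : ℝ} (hb : 0 ≤ b) (hs : 0 ≤ s) (hR : 0 ≤ R)
    (hτ : 0 ≤ τ) (hp : 1 / 2 ≤ p) (hp1 : p ≤ 1) (hbR : b ^ 2 ≤ s * R) (hbτ : b ≤ s * τ) :
    b ≤ R ^ (1 - p) * τ ^ (2 * p - 1) * s ^ p := by
  have h1 : 0 ≤ 1 - p := by linarith
  have h2 : 0 ≤ 2 * p - 1 := by linarith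
  calc b = (b ^ 2) ^ (1 - p) * b ^ (2 * p - 1) := by
        rw [← Real.rpow_natCast_mul hb, ← Real.rpow_add_of_nonneg hb (by positivity) h2]
        ring_nf
        exact (Real.rpow_one b).symm
    _ ≤ (s * R) ^ (1 - p) * (s * τ) ^ (2 * p - 1) := by gcongr
    _ = R ^ (1 - p) * τ ^ (2 * p - 1) * (s ^ (1 - p) * s ^ (2 * p - 1)) := by
        rw [Real.mul_rpow hs hR, Real.mul_rpow hs hτ]
        ring
    _ = R ^ (1 - p) * τ ^ (2 * p - 1) * s ^ p := by
        rw [← Real.rpow_add_of_nonneg hs h1 h2]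
        ring_nf

/-- Interpolation between Cauchy–Schwarz and the `ℓ₁`-`ℓ_∞` bound: the gradient of a Boolean
function has `sens f x` nonzero entries, each of size `1 / 2`. -/
lemma abs_sum_coordLaplacian_toReal_mul_le (f : (Fin n → Bool) → Bool) (x : Fin n → Bool)
    {p R τ : ℝ} (hp : 1 / 2 ≤ p) (hp1 : p ≤ 1) (hτ : 0 ≤ τ) {u : Fin n → ℝ}
    (huR : ∑ i, u i ^ 2 ≤ R) (huτ : ∀ i, |u i| ≤ τ) :
    |∑ i, coordLaplacian i (toReal f) x * u i|
      ≤ R ^ (1 - p) * τ ^ (2 * p - 1) * (sens f x : ℝ) ^ p := by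
  refine le_rpow_mul_rpow_mul_rpow (abs_nonneg _) (by positivity)
    ((sum_nonneg fun i _ => sq_nonneg (u i)).trans huR) hτ hp hp1 ?_ ?_
  · have hgrad : ∑ i, coordLaplacian i (toReal f) x ^ 2 ≤ sens f x := by
      rw [← mul_one (sens f x : ℝ), ← sum_ite_hcFlip_ne]
      refine sum_le_sum fun i _ => ?_
      rw [← sq_abs, abs_coordLaplacian_toReal]
      split_ifs <;> norm_num
    calc |∑ i, coordLaplacian i (toReal f) x * u i| ^ 2
        ≤ (∑ i, coordLaplacian i (toReal f) x ^ 2) * ∑ i, u i ^ 2 := by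
          rw [sq_abs]
          exact sum_mul_sq_le_sq_mul_sq _ _ _
      _ ≤ sens f x * R := by gcongr
  · rw [← sum_ite_hcFlip_ne]
    refine (abs_sum_le_sum_abs _ _).trans (sum_le_sum fun i _ => ?_)
    rw [abs_mul, abs_coordLaplacian_toReal]
    split_ifs
    · linarith [huτ i, abs_nonneg (u i)]
    · rw [zero_mul]

/-- Moving the noise onto `u` replaces `u i x` by an average of `u i y` over `y`, with the same
weights for every `i`; so the pointwise bounds on `u` survive. -/
lemma hcExp_sum_noise_coordLaplacian_toReal_mul_le (f : (Fin n → Bool) → Bool) {ρ p R τ : ℝ}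
    (hρ0 : 0 ≤ ρ) (hρ1 : ρ ≤ 1) (hp : 1 / 2 ≤ p) (hp1 : p ≤ 1) (hτ : 0 ≤ τ)
    {u : Fin n → (Fin n → Bool) → ℝ} (huR : ∀ y, ∑ i, u i y ^ 2 ≤ R)
    (huτ : ∀ i y, |u i y| ≤ τ) :
    hcExp n (fun x => ∑ i, noise univ ρ (coordLaplacian i (toReal f)) x * u i x)
      ≤ R ^ (1 - p) * τ ^ (2 * p - 1) * hcExp n (fun x => (sens f x : ℝ) ^ p) := by
  simp only [hcExp_sum, hcExp_noise_mul]
  rw [← hcExp_sum, ← hcExp_const_mul]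
  refine hcExp_mono fun x => ?_
  rw [← noise_sum_mul univ ρ univ (fun i => coordLaplacian i (toReal f) x) u x]
  exact noise_le_of_le univ hρ0 hρ1 (fun y => (le_abs_self _).trans <|
    abs_sum_coordLaplacian_toReal_mul_le f x hp hp1 hτ (huR y) fun i => huτ i y) x

lemma toReal_sq_le_one (f : (Fin n → Bool) → Bool) (x : Fin n → Bool) : toReal f x ^ 2 ≤ 1 := by
  unfold toReal; split_ifs <;> norm_num

lemma hcExp_sens_rpow_nonneg (f : (Fin n → Bool) → Bool) (p : ℝ) :
    0 ≤ hcExp n (fun x => (sens f x : ℝ) ^ p) :=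
  hcExp_nonneg fun x => by positivity

/-! ### High levels -/

lemma noiseEnergy_toReal_le (f : (Fin n → Bool) → Bool) {ρ p : ℝ} (hρ0 : 0 ≤ ρ) (hρ1 : ρ < 1)
    (hp : 1 / 2 ≤ p) (hp1 : p ≤ 1) :
    noiseEnergy ρ (toReal f)
      ≤ (ρ ^ 2 / (1 - ρ ^ 2)) ^ (1 - p) * hcExp n (fun x => (sens f x : ℝ) ^ p) := by
  have hbound : ∀ i x, |noise univ ρ (coordLaplacian i (toReal f)) x| ≤ 1 := fun i =>
    abs_noise_le_of_abs_le univ hρ0 hρ1.le fun y => by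
      rw [abs_coordLaplacian_toReal]
      split_ifs <;> norm_num
  simpa only [noiseEnergy, hcExp_sum, sq, Real.one_rpow, mul_one] using
    hcExp_sum_noise_coordLaplacian_toReal_mul_le f hρ0 hρ1.le hp hp1 zero_le_one
      (sum_noise_coordLaplacian_sq_le_div hρ0 hρ1 (toReal_sq_le_one f)) hbound

lemma one_div_four_le_one_sub_pow {d : ℕ} (hd : 1 ≤ d) :
    (1 / 4 : ℝ) ≤ (1 - 1 / (2 * d)) ^ (2 * d) := by
  have hd' : (1 : ℝ) ≤ d := by exact_mod_cast hd
  have hsmall : 1 / (2 * (d : ℝ)) ≤ 1 / 2 := by gcongr; linarith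
  have hbernoulli : (1 / 2 : ℝ) ≤ (1 - 1 / (2 * d)) ^ d :=
    calc (1 / 2 : ℝ) = 1 + d * (-(1 / (2 * d))) := by field_simp; ring
      _ ≤ (1 + -(1 / (2 * (d : ℝ)))) ^ d := one_add_mul_le_pow (by linarith) d
      _ = (1 - 1 / (2 * d)) ^ d := by rw [← sub_eq_add_neg]
  calc (1 / 4 : ℝ) = (1 / 2) ^ 2 := by norm_num
    _ ≤ ((1 - 1 / (2 * (d : ℝ))) ^ d) ^ 2 := by gcongr
    _ = (1 - 1 / (2 * d)) ^ (2 * d) := by rw [mul_comm 2 d, pow_mul]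

lemma wApprox_toReal_le (f : (Fin n → Bool) → Bool) {p : ℝ} (hp : 1 / 2 ≤ p) (hp1 : p ≤ 1)
    {d : ℕ} (hd : 1 ≤ d) :
    wApprox n (toReal f) d ≤ 8 * hcExp n (fun x => (sens f x : ℝ) ^ p) * (d : ℝ) ^ (-p) := by
  set E := hcExp n (fun x => (sens f x : ℝ) ^ p)
  have hE : 0 ≤ E := hcExp_sens_rpow_nonneg f p
  have hd' : (1 : ℝ) ≤ d := by exact_mod_cast hd
  have hd0 : (0 : ℝ) < d := by linarith
  have hε0 : 0 < 1 / (2 * (d : ℝ)) := by positivity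
  have hε1 : 1 / (2 * (d : ℝ)) ≤ 1 / 2 := by gcongr; linarith
  obtain ⟨ρ, hρ0, hρ⟩ : ∃ ρ : ℝ, 0 ≤ ρ ∧ ρ ^ 2 = 1 - 1 / (2 * d) :=
    ⟨√(1 - 1 / (2 * d)), Real.sqrt_nonneg _, Real.sq_sqrt (by linarith)⟩
  have hρ1 : ρ < 1 := by nlinarith
  have hW : 0 ≤ wBand n (toReal f) d (2 * d) := sum_nonneg fun S _ => sq_nonneg _
  have hratio : ρ ^ 2 / (1 - ρ ^ 2) ≤ 2 * d := by
    rw [hρ, sub_sub_cancel, div_le_iff₀ hε0, mul_one_div_cancel (by positivity)]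
    linarith
  have hpow : (2 * (d : ℝ)) ^ (1 - p) ≤ 2 * (d * (d : ℝ) ^ (-p)) := by
    rw [Real.mul_rpow zero_le_two hd0.le, sub_eq_add_neg 1 p, Real.rpow_add hd0, Real.rpow_one]
    gcongr
    exact Real.rpow_le_self_of_one_le one_le_two (by linarith)
  refine le_of_mul_le_mul_left ?_ (show (0 : ℝ) < d / 4 by positivity)
  calc d / 4 * wApprox n (toReal f) d
      = d * (1 / 4) * wApprox n (toReal f) d := by ring
    _ = d * (1 / 4) * wBand n (toReal f) d (2 * d) := rfl
    _ ≤ d * (ρ ^ 2) ^ (2 * d) * wBand n (toReal f) d (2 * d) := by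
        rw [hρ]
        gcongr
        exact one_div_four_le_one_sub_pow hd
    _ ≤ noiseEnergy ρ (toReal f) := mul_wBand_le_noiseEnergy (by linarith) _ _ _
    _ ≤ (ρ ^ 2 / (1 - ρ ^ 2)) ^ (1 - p) * E := noiseEnergy_toReal_le f hρ0 hρ1 hp hp1
    _ ≤ (2 * d) ^ (1 - p) * E := by
        have : 0 ≤ ρ ^ 2 / (1 - ρ ^ 2) := div_nonneg (sq_nonneg ρ) (by linarith)
        gcongr
    _ ≤ 2 * (d * (d : ℝ) ^ (-p)) * E := by gcongr
    _ = d / 4 * (8 * E * (d : ℝ) ^ (-p)) := by ring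

lemma wGe_toReal_le (f : (Fin n → Bool) → Bool) {p : ℝ} (hp : 1 / 2 ≤ p) (hp1 : p ≤ 1)
    {d : ℕ} (hd : 1 ≤ d) :
    wGe n (toReal f) d ≤ 32 * hcExp n (fun x => (sens f x : ℝ) ^ p) * (d : ℝ) ^ (-p) := by
  linarith [wGe_le_of_wApprox_le hp (fun _ => wApprox_toReal_le f hp hp1) hd]

lemma hcVar_le_hcExp_sens_rpow (f : (Fin n → Bool) → Bool) {p : ℝ} (hp : 1 / 2 ≤ p)
    (hp1 : p ≤ 1) : hcVar n f ≤ 32 * hcExp n (fun x => (sens f x : ℝ) ^ p) := by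
  simpa [hcVar_eq_wGe_one] using wGe_toReal_le f hp hp1 le_rfl

/-! ### Low levels -/

lemma sq_le_pow_four_div_add_mul_truncation {α : Type*} (v : α → ℝ) {τ : ℝ} (hτ : 0 < τ) (x : α) :
    v x ^ 2 ≤ (τ ^ 2)⁻¹ * v x ^ 4 + v x * ProbabilityTheory.truncation v τ x := by
  rcases lt_or_ge |v x| τ with hv | hv
  · rw [ProbabilityTheory.truncation_eq_self hv, ← sq]
    exact le_add_of_nonneg_left (by positivity)
  · have htrunc : 0 ≤ v x * ProbabilityTheory.truncation v τ x := by
      by_cases hmem : v x ∈ Set.Ioc (-τ) τ <;>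
        simp [ProbabilityTheory.truncation, hmem, mul_self_nonneg]
    have hsq : τ ^ 2 ≤ v x ^ 2 := sq_le_sq.mpr (by rwa [abs_of_pos hτ])
    have : v x ^ 2 ≤ (τ ^ 2)⁻¹ * v x ^ 4 := by
      rw [le_inv_mul_iff₀ (by positivity)]
      calc τ ^ 2 * v x ^ 2 ≤ v x ^ 2 * v x ^ 2 := by gcongr
        _ = v x ^ 4 := by ring
    linarith

/-- Where `T L_i f` exceeds `τ` hypercontractivity is used, elsewhere the moment of the
sensitivity. The noise rate is `1 / 4 = 1 / 2 * 1 / 2`: one half is spent on hypercontractivity, the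
other on comparing the energy with the variance. -/
lemma noiseEnergy_toReal_le_of_influence_le (f : (Fin n → Bool) → Bool) {p M τ : ℝ}
    (hp : 1 / 2 ≤ p) (hp1 : p ≤ 1) (hM0 : 0 ≤ M) (hτ : 0 < τ) (hM : ∀ i, influence n f i ≤ M) :
    noiseEnergy (1 / 4) (toReal f)
      ≤ (τ ^ 2)⁻¹ * M * hcVar n f
        + τ ^ (2 * p - 1) * hcExp n (fun x => (sens f x : ℝ) ^ p) := by
  set v : Fin n → (Fin n → Bool) → ℝ :=
    fun i => noise univ (1 / 4) (coordLaplacian i (toReal f))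
  have hlarge : ∑ i, hcExp n (fun x => v i x ^ 4) ≤ M * hcVar n f := by
    have hL : ∀ i, hcExp n (fun x => coordLaplacian i (toReal f) x ^ 2) ≤ M := fun i => by
      rw [hcExp_coordLaplacian_toReal_sq]
      linarith [hM i]
    have := sum_hcExp_noise_coordLaplacian_pow_four_le (ρ := 1 / 2) (σ := 1 / 2)
      (by norm_num) (by norm_num) hM0 (toReal f) hL
    rwa [show (1 / 2 * (1 / 2) : ℝ) = 1 / 4 by norm_num, ← hcVar_eq_wGe_one] at this
  have hsmall : hcExp n (fun x => ∑ i, v i x * ProbabilityTheory.truncation (v i) τ x)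
      ≤ τ ^ (2 * p - 1) * hcExp n (fun x => (sens f x : ℝ) ^ p) := by
    have hsq : ∀ y, ∑ i, ProbabilityTheory.truncation (v i) τ y ^ 2 ≤ 1 := fun y =>
      (sum_le_sum fun i _ => sq_le_sq.mpr
        (ProbabilityTheory.abs_truncation_le_abs_self (v i) τ y)).trans <|
      (sum_noise_coordLaplacian_sq_le_div (by norm_num) (by norm_num)
        (toReal_sq_le_one f) y).trans (by norm_num)
    have habs : ∀ i y, |ProbabilityTheory.truncation (v i) τ y| ≤ τ := fun i y =>
      (ProbabilityTheory.abs_truncation_le_bound (v i) τ y).trans_eq (abs_of_pos hτ)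
    simpa only [Real.one_rpow, one_mul] using hcExp_sum_noise_coordLaplacian_toReal_mul_le f
      (by norm_num) (by norm_num) hp hp1 hτ.le hsq habs
  calc noiseEnergy (1 / 4) (toReal f) = ∑ i, hcExp n (fun x => v i x ^ 2) := rfl
    _ ≤ ∑ i, hcExp n (fun x =>
          (τ ^ 2)⁻¹ * v i x ^ 4 + v i x * ProbabilityTheory.truncation (v i) τ x) :=
        sum_le_sum fun i _ => hcExp_mono (sq_le_pow_four_div_add_mul_truncation (v i) hτ)
    _ = (τ ^ 2)⁻¹ * ∑ i, hcExp n (fun x => v i x ^ 4)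
          + hcExp n (fun x => ∑ i, v i x * ProbabilityTheory.truncation (v i) τ x) := by
        simp only [hcExp_add, hcExp_const_mul, hcExp_sum, sum_add_distrib, mul_sum]
    _ ≤ (τ ^ 2)⁻¹ * (M * hcVar n f)
          + τ ^ (2 * p - 1) * hcExp n (fun x => (sens f x : ℝ) ^ p) := by gcongr
    _ = _ := by rw [mul_assoc]

/-- The threshold `τ = M ^ (1 / 4)` makes both terms of
`noiseEnergy_toReal_le_of_influence_le` small. -/
lemma noiseEnergy_toReal_le_rpow_mul (f : (Fin n → Bool) → Bool) {δ p M : ℝ} (hδ : 0 ≤ δ)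
    (hp : 1 / 2 + δ ≤ p) (hp1 : p ≤ 1) (hM0 : 0 < M) (hM1 : M ≤ 1)
    (hM : ∀ i, influence n f i ≤ M) :
    noiseEnergy (1 / 4) (toReal f)
      ≤ M ^ (δ / 2) * (hcVar n f + hcExp n (fun x => (sens f x : ℝ) ^ p)) := by
  have hV : 0 ≤ hcVar n f := by
    rw [hcVar_eq_wGe_one]
    exact sum_nonneg fun S _ => sq_nonneg _
  have hE := hcExp_sens_rpow_nonneg f p
  have hvar : ((M ^ (1 / 4 : ℝ)) ^ 2)⁻¹ * M ≤ M ^ (δ / 2) :=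
    calc ((M ^ (1 / 4 : ℝ)) ^ 2)⁻¹ * M = M ^ (1 / 2 : ℝ) := by
          rw [← Real.rpow_mul_natCast hM0.le, ← Real.rpow_neg hM0.le,
            ← Real.rpow_add_one hM0.ne']
          norm_num
      _ ≤ M ^ (δ / 2) := Real.rpow_le_rpow_of_exponent_ge hM0 hM1 (by linarith)
  have hsens : (M ^ (1 / 4 : ℝ)) ^ (2 * p - 1) ≤ M ^ (δ / 2) := by
    rw [← Real.rpow_mul hM0.le]
    exact Real.rpow_le_rpow_of_exponent_ge hM0 hM1 (by linarith)
  refine (noiseEnergy_toReal_le_of_influence_le f (by linarith) hp1 hM0.le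
    (Real.rpow_pos_of_pos hM0 (1 / 4)) hM).trans ?_
  rw [mul_add]
  gcongr

lemma hcVar_le_wGe_add_noiseEnergy (f : (Fin n → Bool) → Bool) {d : ℕ} (hd : 1 ≤ d) :
    hcVar n f ≤ wGe n (toReal f) d + 16 ^ d * noiseEnergy (1 / 4) (toReal f) := by
  have hlow := mul_wBand_le_noiseEnergy (ρ := 1 / 4) (by norm_num) (toReal f) 1 d
  rw [hcVar_eq_wGe_one, wGe_eq_wBand_add_wGe _ hd, add_comm]
  gcongr
  calc wBand n (toReal f) 1 d
      = 16 ^ d * ((1 : ℕ) * ((1 / 4 : ℝ) ^ 2) ^ d * wBand n (toReal f) 1 d) := by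
        rw [Nat.cast_one, one_mul, ← mul_assoc, ← mul_pow]
        norm_num
    _ ≤ 16 ^ d * noiseEnergy (1 / 4) (toReal f) := by gcongr

/-! ### Choice of the parameters -/

lemma one_div_1024_le_of_hcExp_sens_rpow_le {f : (Fin n → Bool) → Bool} {p B : ℝ}
    (hp : 1 / 2 ≤ p) (hp1 : p ≤ 1) (hB : 0 ≤ B) (hV : 0 < hcVar n f)
    (hE : hcExp n (fun x => (sens f x : ℝ) ^ p) ≤ B ^ p * hcVar n f) : 1 / 1024 ≤ B := by
  by_contra! hlt
  have hpow : B ^ p < 1 / 32 :=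
    calc B ^ p < (1 / 1024) ^ p := Real.rpow_lt_rpow hB hlt (by linarith)
      _ ≤ (1 / 1024) ^ (1 / 2 : ℝ) :=
          Real.rpow_le_rpow_of_exponent_ge (by norm_num) (by norm_num) hp
      _ = 1 / 32 := by
          rw [← Real.sqrt_eq_rpow, show (1 / 1024 : ℝ) = (1 / 32) ^ 2 by norm_num,
            Real.sqrt_sq (by norm_num)]
  nlinarith [hcVar_le_hcExp_sens_rpow f hp hp1]

lemma wGe_toReal_le_half_hcVar {f : (Fin n → Bool) → Bool} {p B : ℝ} (hp : 1 / 2 ≤ p)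
    (hp1 : p ≤ 1) (hB : 0 < B) (hV : 0 ≤ hcVar n f)
    (hE : hcExp n (fun x => (sens f x : ℝ) ^ p) ≤ B ^ p * hcVar n f) {d : ℕ}
    (hd : 4096 * B ≤ d) : wGe n (toReal f) d ≤ hcVar n f / 2 := by
  have hd0 : (0 : ℝ) < d := lt_of_lt_of_le (by positivity) hd
  have hpow : (4096 : ℝ) ^ (-p) ≤ 1 / 64 :=
    calc (4096 : ℝ) ^ (-p) ≤ 4096 ^ (-(1 / 2) : ℝ) :=
          Real.rpow_le_rpow_of_exponent_le (by norm_num) (by linarith)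
      _ = 1 / 64 := by
          rw [Real.rpow_neg (by norm_num), ← Real.sqrt_eq_rpow,
            show (4096 : ℝ) = 64 ^ 2 by norm_num, Real.sqrt_sq (by norm_num), one_div]
  calc wGe n (toReal f) d
      ≤ 32 * hcExp n (fun x => (sens f x : ℝ) ^ p) * (d : ℝ) ^ (-p) :=
        wGe_toReal_le f hp hp1 (by exact_mod_cast hd0)
    _ ≤ 32 * (B ^ p * hcVar n f) * (4096 * B) ^ (-p) := by
        gcongr 32 * ?_ * ?_
        exact Real.rpow_le_rpow_of_nonpos (by positivity) hd (by linarith)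
    _ = 32 * hcVar n f * 4096 ^ (-p) := by
        rw [Real.mul_rpow (by norm_num) hB.le, Real.rpow_neg hB.le]
        field_simp
    _ ≤ 32 * hcVar n f * (1 / 64) := by gcongr
    _ = hcVar n f / 2 := by ring

/-- The margin `25000 - 20480 - 2 = 4518` in the exponent beats the constants because
`4518 / 1024 > 2`. -/
lemma sixteen_pow_mul_two_rpow_mul_lt_half {B p : ℝ} (hB : 1 / 1024 ≤ B) (hp0 : 0 ≤ p)
    (hp1 : p ≤ 1) {d : ℕ} (hd : d ≤ 5120 * B) :
    16 ^ d * (2 ^ (-25000 * B) * (1 + B ^ p)) < (1 / 2 : ℝ) := by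
  have hdeg : (16 : ℝ) ^ d ≤ 2 ^ (20480 * B) :=
    calc (16 : ℝ) ^ d = 2 ^ (4 * d : ℝ) := by
          rw [Real.rpow_mul zero_le_two, Real.rpow_natCast]
          norm_num
      _ ≤ 2 ^ (20480 * B) := Real.rpow_le_rpow_of_exponent_le one_le_two (by linarith)
  have hpoly : 1 + B ^ p ≤ 2 ^ (1 + 2 * B) :=
    calc 1 + B ^ p ≤ 1 + (1 + p * (B - 1)) := by
          gcongr
          simpa using rpow_one_add_le_one_add_mul_self (s := B - 1) (by linarith) hp0 hp1
      _ ≤ 2 * (1 + B) := by nlinarith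
      _ ≤ 2 * Real.exp 1 ^ B := by
          rw [Real.exp_one_rpow, add_comm]
          gcongr
          exact Real.add_one_le_exp B
      _ ≤ 2 * (2 ^ 2) ^ B := by
          gcongr
          linarith [Real.exp_one_lt_three]
      _ = 2 ^ (1 + 2 * B) := by
          rw [Real.rpow_add two_pos, Real.rpow_one, Real.rpow_mul zero_le_two, Real.rpow_two]
  calc (16 : ℝ) ^ d * (2 ^ (-25000 * B) * (1 + B ^ p))
      ≤ 2 ^ (20480 * B) * (2 ^ (-25000 * B) * 2 ^ (1 + 2 * B)) := by gcongr
    _ = 2 ^ (1 - 4518 * B) := by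
        rw [← Real.rpow_add two_pos, ← Real.rpow_add two_pos]
        ring_nf
    _ < 2 ^ (-1 : ℝ) := Real.rpow_lt_rpow_of_exponent_lt one_lt_two (by linarith)
    _ = 1 / 2 := by rw [Real.rpow_neg_one, one_div]

lemma exists_influence_ge {f : (Fin n → Bool) → Bool} {δ p B : ℝ} (hδ : 0 < δ)
    (hp : 1 / 2 + δ ≤ p) (hp1 : p ≤ 1) (hB : 0 ≤ B) (hV : 0 < hcVar n f)
    (hE : hcExp n (fun x => (sens f x : ℝ) ^ p) ≤ B ^ p * hcVar n f) :
    ∃ i, influence n f i ≥ 2 ^ (-(50000 / δ) * B) := by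
  by_contra! hinf
  have hp2 : 1 / 2 ≤ p := by linarith
  have hB1 := one_div_1024_le_of_hcExp_sens_rpow_le hp2 hp1 hB hV hE
  set d := ⌈4096 * B⌉₊
  have hd : (d : ℝ) ≤ 5120 * B := by linarith [Nat.ceil_lt_add_one (by positivity : 0 ≤ 4096 * B)]
  have hhigh := wGe_toReal_le_half_hcVar hp2 hp1 (by linarith) hV.le hE (Nat.le_ceil (4096 * B))
  have hlow : 16 ^ d * noiseEnergy (1 / 4) (toReal f) < hcVar n f / 2 :=
    calc 16 ^ d * noiseEnergy (1 / 4) (toReal f)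
        ≤ 16 ^ d * ((2 ^ (-(50000 / δ) * B)) ^ (δ / 2)
            * (hcVar n f + hcExp n (fun x => (sens f x : ℝ) ^ p))) := by
          gcongr
          refine noiseEnergy_toReal_le_rpow_mul f hδ.le hp hp1 (by positivity)
            (Real.rpow_le_one_of_one_le_of_nonpos one_le_two ?_) fun i => (hinf i).le
          exact mul_nonpos_of_nonpos_of_nonneg (neg_nonpos.mpr (by positivity)) hB
      _ ≤ 16 ^ d * (2 ^ (-25000 * B) * (hcVar n f + B ^ p * hcVar n f)) := by
          rw [← Real.rpow_mul zero_le_two,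
            show -(50000 / δ) * B * (δ / 2) = -25000 * B by field_simp; norm_num]
          gcongr
      _ = 16 ^ d * (2 ^ (-25000 * B) * (1 + B ^ p)) * hcVar n f := by ring
      _ < 1 / 2 * hcVar n f := by
          gcongr
          exact sixteen_pow_mul_two_rpow_mul_lt_half hB1 (by linarith) hp1 hd
      _ = hcVar n f / 2 := by ring
  linarith [hcVar_le_wGe_add_noiseEnergy f (d := d) (Nat.one_le_ceil_iff.mpr (by positivity))]

theorem kkl_variant (δ : ℝ) (hδ : 0 < δ) :
    ∃ c : ℝ, 0 < c ∧
      ∀ (p : ℝ), 1 / 2 + δ ≤ p → p ≤ 1 →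
        ∀ (n : ℕ) (f : (Fin n → Bool) → Bool) (A : ℝ),
          0 < hcVar n f →
          hcExp n (fun x => (sens f x : ℝ) ^ p) ≤ A →
          ∃ i : Fin n, influence n f i ≥ 2 ^ (-c * (A / hcVar n f) ^ (1 / p)) := by
  refine ⟨50000 / δ, by positivity, fun p hp hp1 n f A hV hA => ?_⟩
  have hAV : 0 ≤ A / hcVar n f := div_nonneg ((hcExp_sens_rpow_nonneg f p).trans hA) hV.le
  refine exists_influence_ge hδ hp hp1 (Real.rpow_nonneg hAV _) hV ?_
  rwa [one_div, Real.rpow_inv_rpow hAV (by linarith), div_mul_cancel₀ A hV.ne']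

end
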